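/- There exists δ > 0 such that for all real u, v with |u|, |v| < δ, ∑_{k > n ≥ 1} G_0(k,n) u^{k−n−1} v^{n−1} = (1/(1−u)) · ₃F₂((1−u+v)/2, 1/2, 1; (3−u)/2, 3/2; 1), the series converging absolutely. -/

import Mathlib

open scoped BigOperators

/-- The multiple `t`-value of an index `K = (k₁, …, kₙ)` (a list of positive integers):
`t(K) = ∑_{m₁ > ⋯ > mₙ > 0, all mᵢ odd} 1 / (m₁^{k₁} ⋯ mₙ^{kₙ})`. -/
noncomputable def multT (K : List ℕ) : ℝ :=
  ∑' m : Fin K.length → ℕ,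
    if (∀ i, Odd (m i)) ∧ (∀ i j : Fin K.length, i < j → m j < m i) then
      ∏ i, ((m i : ℝ) ^ K.get i)⁻¹
    else 0

/-- The multiple `t`-star value of an index `K = (k₁, …, kₙ)`:
`t*(K) = ∑_{m₁ ≥ ⋯ ≥ mₙ > 0, all mᵢ odd} 1 / (m₁^{k₁} ⋯ mₙ^{kₙ})`. -/
noncomputable def multTStar (K : List ℕ) : ℝ :=
  ∑' m : Fin K.length → ℕ,
    if (∀ i, Odd (m i)) ∧ (∀ i j : Fin K.length, i < j → m j ≤ m i) then
      ∏ i, ((m i : ℝ) ^ K.get i)⁻¹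
    else 0

/-- An index (list of positive integers) is admissible if its first entry is `> 1`. -/
def Admissible (K : List ℕ) : Prop := (∀ i ∈ K, 1 ≤ i) ∧ 2 ≤ K.headI

instance : DecidablePred Admissible := fun K =>
  inferInstanceAs (Decidable ((∀ i ∈ K, 1 ≤ i) ∧ 2 ≤ K.headI))

/-- `G0h k n s` is the sum of multiple `t`-values over all admissible indices of
weight `k`, depth `n` and height `s`. -/
noncomputable def G0h (k n s : ℕ) : ℝ :=
  ∑' K : List ℕ,
    if Admissible K ∧ K.sum = k ∧ K.length = n ∧
        K.countP (fun i => decide (2 ≤ i)) = s then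
      multT K
    else 0

/-- `G0hStar k n s` is the sum of multiple `t`-star values over all admissible indices of
weight `k`, depth `n` and height `s`. -/
noncomputable def G0hStar (k n s : ℕ) : ℝ :=
  ∑' K : List ℕ,
    if Admissible K ∧ K.sum = k ∧ K.length = n ∧
        K.countP (fun i => decide (2 ≤ i)) = s then
      multTStar K
    else 0

/-- `G0d k n` is the sum of multiple `t`-values over all admissible indices of
weight `k` and depth `n`. -/
noncomputable def G0d (k n : ℕ) : ℝ :=
  ∑' K : List ℕ,
    if Admissible K ∧ K.sum = k ∧ K.length = n then multT K else 0

/-- `G0dStar k n` is the sum of multiple `t`-star values over all admissible indices of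
weight `k` and depth `n`. -/
noncomputable def G0dStar (k n : ℕ) : ℝ :=
  ∑' K : List ℕ,
    if Admissible K ∧ K.sum = k ∧ K.length = n then multTStar K else 0

/-- The single `t`-value `t(n) = ∑_{m odd, m > 0} 1 / m^n`. -/
noncomputable def tval (n : ℕ) : ℝ := ∑' m : ℕ, 1 / (2 * (m : ℝ) + 1) ^ n

/-- The ascending Pochhammer symbol `(a)ₙ = a (a+1) ⋯ (a+n-1)`. -/
noncomputable def poch (a : ℂ) (n : ℕ) : ℂ := ∏ i ∈ Finset.range n, (a + i)

/-- The generalized hypergeometric function `₃F₂(a, b, c; d, e; z)`. -/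
noncomputable def hyp3F2 (a b c d e z : ℂ) : ℂ :=
  ∑' n : ℕ, poch a n * poch b n * poch c n /
      ((n.factorial : ℂ) * poch d n * poch e n) * z ^ n

/-- The generalized hypergeometric function with upper parameters `as` and lower
parameters `bs`. -/
noncomputable def hypF (as bs : List ℂ) (z : ℂ) : ℂ :=
  ∑' n : ℕ, (as.map fun a => poch a n).prod /
      ((n.factorial : ℂ) * (bs.map fun b => poch b n).prod) * z ^ n

/-- The one-variable multiple polylogarithm
`L_K(z) = ∑_{m₁ > ⋯ > mₙ > 0, all mᵢ odd} z^{m₁} / (m₁^{k₁} ⋯ mₙ^{kₙ})`. -/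
noncomputable def Lt (K : List ℕ) (z : ℝ) : ℝ :=
  ∑' m : Fin K.length → ℕ,
    if h : (∀ i, Odd (m i)) ∧ (∀ i j : Fin K.length, i < j → m j < m i) ∧
        0 < K.length then
      z ^ (m ⟨0, h.2.2⟩) * ∏ i, ((m i : ℝ) ^ K.get i)⁻¹
    else 0

/-- The one-variable star multiple polylogarithm
`L*_K(z) = ∑_{m₁ ≥ ⋯ ≥ mₙ > 0, all mᵢ odd} z^{m₁} / (m₁^{k₁} ⋯ mₙ^{kₙ})`. -/
noncomputable def LtStar (K : List ℕ) (z : ℝ) : ℝ :=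
  ∑' m : Fin K.length → ℕ,
    if h : (∀ i, Odd (m i)) ∧ (∀ i j : Fin K.length, i < j → m j ≤ m i) ∧
        0 < K.length then
      z ^ (m ⟨0, h.2.2⟩) * ∏ i, ((m i : ℝ) ^ K.get i)⁻¹
    else 0

/-- `G0hz k n s z` is the sum of `L_K(z)` over all admissible indices `K` of
weight `k`, depth `n` and height `s`. -/
noncomputable def G0hz (k n s : ℕ) (z : ℝ) : ℝ :=
  ∑' K : List ℕ,
    if Admissible K ∧ K.sum = k ∧ K.length = n ∧
        K.countP (fun i => decide (2 ≤ i)) = s then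
      Lt K z
    else 0

/-- `G0hzStar k n s z` is the sum of `L*_K(z)` over all admissible indices `K` of
weight `k`, depth `n` and height `s`. -/
noncomputable def G0hzStar (k n s : ℕ) (z : ℝ) : ℝ :=
  ∑' K : List ℕ,
    if Admissible K ∧ K.sum = k ∧ K.length = n ∧
        K.countP (fun i => decide (2 ≤ i)) = s then
      LtStar K z
    else 0

/-!
Group the multiple sums by their largest variable `m₁ = 2N + 1`. Each smaller odd number `2j + 1`
either does not occur or occurs with some exponent `≥ 1`, so summing a geometric series over that
exponent gives the factor `1 + v / (2j + 1 - u)`; the exponent `≥ 2` of `m₁` itself gives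
`1 / ((2N + 1) (2N + 1 - u))`. The resulting series over `N` is `(1 - u)⁻¹` times the `₃F₂` series
at `1`.

All coefficients are nonnegative, so absolute convergence may be checked on `0 ≤ u < 1` and
`0 ≤ v < 2`. There, with `P N = ∏_{j < N} (1 + v / (2j + 1 - u))` and `D N = P N / (2N + 1 - u)`,
the identity `D N - D (N + 1) = (2 - v) P N / ((2N + 1 - u) (2N + 3 - u))` makes the comparison
series telescope.
-/

theorem hasSum_prod_of_nonneg {α β : Type*} {f : α × β → ℝ} {g : α → ℝ} {s : ℝ}
    (hf : 0 ≤ f) (hfg : ∀ a, HasSum (fun b => f (a, b)) (g a)) (hg : HasSum g s) :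
    HasSum f s := by
  have hsum : Summable f := (summable_prod_of_nonneg hf).2
    ⟨fun a => (hfg a).summable, by simpa only [(hfg _).tsum_eq] using hg.summable⟩
  exact (hsum.hasSum.prod_fiberwise hfg).unique hg ▸ hsum.hasSum

theorem hasSum_mul_prod {𝕜 : Type*} [RCLike 𝕜] {α β : Type*} {f : α → 𝕜}
    {g : β → 𝕜} {s t : 𝕜} (hf : HasSum f s) (hg : HasSum g t) :
    HasSum (fun p : α × β => f p.1 * g p.2) (s * t) :=
  hf.mul hg (summable_mul_of_summable_norm hf.summable.norm hg.summable.norm)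

theorem hasSum_inv_pow_succ_mul_pow {𝕜 : Type*} [NormedField 𝕜] {x u : 𝕜} (h : ‖u‖ < ‖x‖) :
    HasSum (fun k : ℕ => (x ^ (k + 1))⁻¹ * u ^ k) (x - u)⁻¹ := by
  have hx : x ≠ 0 := norm_pos_iff.1 ((norm_nonneg u).trans_lt h)
  have hux : ‖u / x‖ < 1 := by rwa [norm_div, div_lt_one (norm_pos_iff.2 hx)]
  have hgeom := (hasSum_geometric_of_norm_lt_one hux).mul_left x⁻¹
  rw [← mul_inv, mul_sub, mul_one, mul_div_cancel₀ u hx] at hgeom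
  convert! hgeom using 2 with k
  rw [div_pow, pow_succ, mul_inv]
  ring

/-- The summand of `multT K` at the odd numbers `mᵢ = 2 nᵢ + 1`, extended by zero to the tuples
`n` that are not strictly decreasing. -/
noncomputable def multTTerm (K : List ℕ) : (Fin K.length → ℕ) → ℝ :=
  {n | StrictAnti n}.indicator fun n => ∏ i, ((2 * (n i : ℝ) + 1) ^ K.get i)⁻¹

/-- The multiple `t`-value of `K` truncated to `m₁ < 2N`, i.e. the sum of `multTTerm K n` over
all `n` with entries below `N`, defined by recursion on the outermost sum. -/
noncomputable def truncMultT : List ℕ → ℕ → ℝ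
  | [], _ => 1
  | k :: K, N => ∑ n ∈ Finset.range N, ((2 * (n : ℝ) + 1) ^ k)⁻¹ * truncMultT K n

theorem truncMultT_cons_zero (k : ℕ) (K : List ℕ) : truncMultT (k :: K) 0 = 0 :=
  Finset.sum_range_zero _

theorem truncMultT_cons_succ (k : ℕ) (K : List ℕ) (N : ℕ) :
    truncMultT (k :: K) (N + 1) =
      truncMultT (k :: K) N + ((2 * (N : ℝ) + 1) ^ k)⁻¹ * truncMultT K N :=
  Finset.sum_range_succ _ _

theorem truncMultT_nonneg (K : List ℕ) (N : ℕ) : 0 ≤ truncMultT K N := by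
  induction K generalizing N with
  | nil => exact zero_le_one
  | cons k K ih => exact Finset.sum_nonneg fun n _ => mul_nonneg (by positivity) (ih n)

theorem multTTerm_nonneg (K : List ℕ) : 0 ≤ multTTerm K :=
  Set.indicator_nonneg fun n _ => Finset.prod_nonneg fun i _ => by positivity

theorem multTTerm_cons (k : ℕ) (K : List ℕ) (N : ℕ) (n : Fin K.length → ℕ) :
    multTTerm (k :: K) (Fin.cons N n : Fin (K.length + 1) → ℕ) =
      ((2 * (N : ℝ) + 1) ^ k)⁻¹ * {n | ∀ i, n i < N}.indicator (multTTerm K) n := by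
  classical
  rw [multTTerm, multTTerm, Set.indicator_indicator]
  simp only [Set.indicator_apply, mul_ite, mul_zero]
  exact if_congr (Fin.liftFun_cons (· > ·)) (Fin.prod_univ_succ _) rfl

theorem indicator_multTTerm_cons (k : ℕ) (K : List ℕ) (N x : ℕ) (n : Fin K.length → ℕ) :
    {n | ∀ i, n i < N}.indicator (multTTerm (k :: K)) (Fin.cons x n : Fin (K.length + 1) → ℕ) =
      (Finset.range N : Set ℕ).indicator
        (fun x => ((2 * (x : ℝ) + 1) ^ k)⁻¹ * {n | ∀ i, n i < x}.indicator (multTTerm K) n) x := by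
  classical
  simp only [← multTTerm_cons]
  simp only [Set.indicator_apply, Finset.mem_coe, Finset.mem_range]
  by_cases hn : ∀ i, n i < x
  · refine if_congr ⟨fun h => h 0, fun hx => Fin.cases hx fun i => (hn i).trans hx⟩ rfl rfl
  · have hzero : multTTerm (k :: K) (Fin.cons x n : Fin (K.length + 1) → ℕ) = 0 := by
      rw [multTTerm_cons,
        Set.indicator_of_notMem (s := {m : Fin K.length → ℕ | ∀ i, m i < x}) hn, mul_zero]
    simp only [hzero, ite_self]

theorem hasSum_indicator_multTTerm (K : List ℕ) (N : ℕ) :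
    HasSum ({n | ∀ i, n i < N}.indicator (multTTerm K)) (truncMultT K N) := by
  induction K generalizing N with
  | nil =>
    convert! hasSum_fintype ({n : Fin 0 → ℕ | ∀ i, n i < N}.indicator (multTTerm [])) using 1
    simp [truncMultT, multTTerm, Subsingleton.strictAnti]
  | cons k K ih =>
    refine (Fin.consEquiv fun _ : Fin (K.length + 1) => ℕ).hasSum_iff.1
      (hasSum_prod_of_nonneg
        (fun p => Set.indicator_nonneg (fun n _ => multTTerm_nonneg (k :: K) n) _) (fun x => ?_)
        (hasSum_subtype_iff_indicator.1 ((Finset.range N).hasSum fun x =>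
          ((2 * (x : ℝ) + 1) ^ k)⁻¹ * truncMultT K x)))
    refine HasSum.congr_fun ?_ fun n => indicator_multTTerm_cons k K N x n
    by_cases hx : x ∈ (Finset.range N : Set ℕ)
    · simpa only [Set.indicator_of_mem hx] using (ih x).mul_left _
    · simpa only [Set.indicator_of_notMem hx] using hasSum_zero

theorem multT_eq_tsum_multTTerm (K : List ℕ) : multT K = ∑' n, multTTerm K n := by
  classical
  have hodd : Function.Injective fun (n : Fin K.length → ℕ) i => 2 * n i + 1 := fun n n' h =>
    funext fun i => by simpa using congrFun h i
  rw [multT, ← hodd.tsum_eq]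
  · refine tsum_congr fun n => ?_
    simp [multTTerm, Set.indicator_apply, StrictAnti]
  · intro m hm
    choose n hn using (of_not_not fun h => hm (if_neg fun h' => h h'.1) : ∀ i, Odd (m i))
    exact ⟨n, (funext hn).symm⟩

theorem hasSum_multT_cons {k : ℕ} {K : List ℕ}
    (hs : Summable fun N : ℕ => ((2 * (N : ℝ) + 1) ^ k)⁻¹ * truncMultT K N) :
    HasSum (fun N : ℕ => ((2 * (N : ℝ) + 1) ^ k)⁻¹ * truncMultT K N) (multT (k :: K)) := by
  have hcons := hasSum_prod_of_nonneg
    (f := multTTerm (k :: K) ∘ Fin.consEquiv fun _ : Fin (K.length + 1) => ℕ)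
    (fun p => multTTerm_nonneg (k :: K) _)
    (fun N => ((hasSum_indicator_multTTerm K N).mul_left _).congr_fun (multTTerm_cons k K N))
    hs.hasSum
  rw [multT_eq_tsum_multTTerm, ((Equiv.hasSum_iff _).1 hcons).tsum_eq]
  exact hs.hasSum

section Field

variable {𝕜 : Type*} [Field 𝕜]

/-- The product of the rational functions `1 + v / (2j + 1 - u)` over `j < N`. It is the generating
function of the truncated multiple `t`-values: the factor at `j` records whether the odd number
`2j + 1` occurs as a summation variable, and with which exponent. -/
noncomputable def truncProd (u v : 𝕜) (N : ℕ) : 𝕜 :=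
  ∏ j ∈ Finset.range N, (1 + v / (2 * j + 1 - u))

theorem truncProd_succ (u v : 𝕜) (N : ℕ) :
    truncProd u v (N + 1) = truncProd u v N * (1 + v / (2 * N + 1 - u)) :=
  Finset.prod_range_succ _ N

theorem truncProd_div_sub_truncProd_succ_div {u : 𝕜} (v : 𝕜) {N : ℕ} (h₁ : 2 * N + 1 - u ≠ 0)
    (h₃ : 2 * N + 3 - u ≠ 0) :
    truncProd u v N / (2 * N + 1 - u) - truncProd u v (N + 1) / (2 * (N + 1 : ℕ) + 1 - u) =
      (2 - v) * (truncProd u v N / ((2 * N + 1 - u) * (2 * N + 3 - u))) := by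
  rw [truncProd_succ, show 2 * ((N + 1 : ℕ) : 𝕜) + 1 - u = 2 * N + 3 - u by push_cast; ring]
  field_simp
  ring

/-- The part of the generating function of the sums `G₀(k,n)` that comes from the summation
variables with largest entry `m₁ = 2N + 1`. -/
noncomputable def genFunSlice (u v : 𝕜) (N : ℕ) : 𝕜 :=
  ((2 * N + 1) * (2 * N + 1 - u))⁻¹ * truncProd u v N

end Field

section GeneratingFunction

variable {𝕜 : Type*} [RCLike 𝕜] {u v : 𝕜}

theorem norm_lt_norm_two_mul_add_one (hu : ‖u‖ < 1) (N : ℕ) : ‖u‖ < ‖(2 * N + 1 : 𝕜)‖ := by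
  have hnorm : ‖(2 * N + 1 : 𝕜)‖ = 2 * N + 1 := by
    exact_mod_cast RCLike.norm_natCast (K := 𝕜) (2 * N + 1)
  linarith [N.cast_nonneg (α := ℝ)]

theorem two_mul_add_one_sub_ne_zero (hu : ‖u‖ < 1) (N : ℕ) : (2 * N + 1 - u : 𝕜) ≠ 0 := fun h =>
  (norm_lt_norm_two_mul_add_one hu N).ne' (congrArg norm (sub_eq_zero.1 h))

theorem hasSum_inv_two_mul_add_one_pow_succ_mul_pow (hu : ‖u‖ < 1) (N : ℕ) :
    HasSum (fun k : ℕ => ((2 * N + 1 : 𝕜) ^ (k + 1))⁻¹ * u ^ k) (2 * N + 1 - u)⁻¹ :=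
  hasSum_inv_pow_succ_mul_pow (norm_lt_norm_two_mul_add_one hu N)

theorem hasSum_truncMultT (hu : ‖u‖ < 1) (v : 𝕜) (N : ℕ) :
    HasSum (fun K : List ℕ => (truncMultT (K.map (· + 1)) N : 𝕜) * u ^ K.sum * v ^ K.length)
      (truncProd u v N) := by
  induction N with
  | zero =>
    convert! hasSum_single (f := fun K : List ℕ =>
      (truncMultT (K.map (· + 1)) 0 : 𝕜) * u ^ K.sum * v ^ K.length) [] ?_ using 1
    · simp [truncProd, truncMultT]
    · rintro (_ | ⟨k, K⟩) hK
      · exact absurd rfl hK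
      · simp [truncMultT_cons_zero]
  | succ N ih =>
    have hcons : Function.Injective fun p : ℕ × List ℕ => p.1 :: p.2 := fun p q h =>
      Prod.ext (List.cons.inj h).1 (List.cons.inj h).2
    have hdiff : HasSum (fun K : List ℕ =>
        ((truncMultT (K.map (· + 1)) (N + 1) - truncMultT (K.map (· + 1)) N : ℝ) : 𝕜) *
          u ^ K.sum * v ^ K.length)
        (v * ((2 * N + 1 - u)⁻¹ * truncProd u v N)) := by
      rw [← hcons.hasSum_iff]
      · refine ((hasSum_mul_prod (hasSum_inv_two_mul_add_one_pow_succ_mul_pow hu N)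
          ih).mul_left v).congr_fun fun ⟨k, K⟩ => ?_
        simp only [Function.comp, List.map_cons, truncMultT_cons_succ, add_sub_cancel_left,
          List.sum_cons, List.length_cons]
        push_cast
        ring
      · rintro (_ | ⟨k, K⟩) hK
        · simp [truncMultT]
        · exact absurd ⟨(k, K), rfl⟩ hK
    convert! ih.add hdiff using 1
    · funext K
      push_cast
      ring
    · rw [truncProd_succ]
      ring

/-- The summand, indexed by `(N, k, K)`, of the generating function of the multiple `t`-values of
the admissible indices `(k + 2) :: K.map (· + 1)`, in which `2N + 1` is the largest summation
variable `m₁`. -/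
noncomputable def genFunTerm (u v : 𝕜) (p : ℕ × ℕ × List ℕ) : 𝕜 :=
  (((2 * (p.1 : ℝ) + 1) ^ (p.2.1 + 2))⁻¹ * truncMultT (p.2.2.map (· + 1)) p.1 : ℝ) *
    u ^ (p.2.1 + p.2.2.sum) * v ^ p.2.2.length

theorem hasSum_genFunTerm_slice (hu : ‖u‖ < 1) (v : 𝕜) (N : ℕ) :
    HasSum (fun q => genFunTerm u v (N, q)) (genFunSlice u v N) := by
  rw [genFunSlice, mul_inv]
  refine (hasSum_mul_prod ((hasSum_inv_two_mul_add_one_pow_succ_mul_pow hu N).mul_left _)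
    (hasSum_truncMultT hu v N)).congr_fun fun q => ?_
  rw [genFunTerm, pow_succ _ (q.1 + 1), mul_inv]
  push_cast
  ring

theorem norm_genFunTerm (u v : 𝕜) (p : ℕ × ℕ × List ℕ) :
    ‖genFunTerm u v p‖ = genFunTerm ‖u‖ ‖v‖ p := by
  have hcoeff : 0 ≤ ((2 * (p.1 : ℝ) + 1) ^ (p.2.1 + 2))⁻¹ * truncMultT (p.2.2.map (· + 1)) p.1 :=
    mul_nonneg (by positivity) (truncMultT_nonneg _ _)
  simp only [genFunTerm, norm_mul, norm_pow, RCLike.norm_of_nonneg hcoeff, RCLike.ofReal_real_eq_id,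
    id]

end GeneratingFunction

theorem truncProd_nonneg {u v : ℝ} (hu : u < 1) (hv : 0 ≤ v) (N : ℕ) : 0 ≤ truncProd u v N :=
  Finset.prod_nonneg fun j _ => by
    have hden : 0 ≤ 2 * (j : ℝ) + 1 - u := by linarith [j.cast_nonneg (α := ℝ)]
    exact add_nonneg zero_le_one (div_nonneg hv hden)

theorem summable_truncProd_div {u v : ℝ} (hu : u < 1) (hv₀ : 0 ≤ v) (hv : v < 2) :
    Summable fun N : ℕ => truncProd u v N / ((2 * N + 1 - u) * (2 * N + 3 - u)) := by
  have hden (N : ℕ) : 0 < 2 * (N : ℝ) + 1 - u := by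
    linarith [N.cast_nonneg (α := ℝ)]
  refine (summable_mul_left_iff (sub_pos.2 hv).ne').1 (summable_of_sum_range_le (c := (1 - u)⁻¹)
    (fun N => ?_) fun n => ?_)
  · exact mul_nonneg (sub_pos.2 hv).le (div_nonneg (truncProd_nonneg hu hv₀ N)
      (mul_nonneg (hden N).le (by linarith [hden N])))
  · rw [Finset.sum_congr rfl fun N _ => (truncProd_div_sub_truncProd_succ_div v (hden N).ne'
      (by linarith [hden N])).symm, Finset.sum_range_sub']
    have htail := div_nonneg (truncProd_nonneg hu hv₀ n) (hden n).le
    simpa [truncProd] using htail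

theorem summable_genFunSlice {u v : ℝ} (hu₀ : 0 ≤ u) (hu : u < 1) (hv₀ : 0 ≤ v) (hv : v < 2) :
    Summable (genFunSlice u v) := by
  refine ((summable_truncProd_div hu hv₀ hv).mul_left 3).of_nonneg_of_le (fun N => ?_) fun N => ?_
  all_goals
    have : (0 : ℝ) ≤ N := N.cast_nonneg
    have hprod := truncProd_nonneg hu hv₀ N
    have hden₁ : 0 < 2 * (N : ℝ) + 1 - u := by linarith
    have hden₃ : 0 < 2 * (N : ℝ) + 3 - u := by linarith
  · exact mul_nonneg (by positivity) hprod
  · have hinv : (2 * (N : ℝ) + 1)⁻¹ ≤ 3 / (2 * N + 3 - u) := by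
      rw [inv_le_comm₀ (by positivity) (by positivity), inv_div]
      linarith
    calc genFunSlice u v N = (2 * (N : ℝ) + 1)⁻¹ * (truncProd u v N / (2 * N + 1 - u)) := by
          rw [genFunSlice, mul_inv]; ring
      _ ≤ 3 / (2 * N + 3 - u) * (truncProd u v N / (2 * N + 1 - u)) := by gcongr
      _ = 3 * (truncProd u v N / ((2 * N + 1 - u) * (2 * N + 3 - u))) := by
          rw [div_mul_div_comm, mul_div_assoc, mul_comm (2 * (N : ℝ) + 3 - u)]

theorem summable_genFunTerm {𝕜 : Type*} [RCLike 𝕜] {u v : 𝕜} (hu : ‖u‖ < 1) (hv : ‖v‖ < 2) :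
    Summable (genFunTerm u v) := by
  refine Summable.of_norm ?_
  simp only [norm_genFunTerm]
  exact (hasSum_prod_of_nonneg (fun p => norm_genFunTerm u v p ▸ norm_nonneg _)
    (hasSum_genFunTerm_slice (by rwa [norm_norm]) ‖v‖)
    (summable_genFunSlice (norm_nonneg u) hu (norm_nonneg v) hv).hasSum).summable

/-- The parametrization of the admissible indices by a natural number and a list of natural
numbers, all of which may be zero. -/
def admissibleIndex (q : ℕ × List ℕ) : List ℕ := (q.1 + 2) :: q.2.map (· + 1)

theorem hasSum_multT_admissibleIndex (q : ℕ × List ℕ) :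
    HasSum (fun N : ℕ => ((2 * (N : ℝ) + 1) ^ (q.1 + 2))⁻¹ * truncMultT (q.2.map (· + 1)) N)
      (multT (admissibleIndex q)) := by
  refine hasSum_multT_cons ?_
  have hterm : Summable (genFunTerm (1 / 2 : ℝ) 1) :=
    summable_genFunTerm (by norm_num) (by norm_num)
  have hmonomial : (1 / 2 : ℝ) ^ (q.1 + q.2.sum) * 1 ^ q.2.length ≠ 0 := by positivity
  refine (summable_mul_right_iff hmonomial).1 ((hterm.comp_injective
    (Prod.mk_left_injective q)).congr fun N => ?_)
  simp only [genFunTerm, Function.comp, RCLike.ofReal_real_eq_id, id, mul_assoc]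

theorem hasSum_multT_genFun {𝕜 : Type*} [RCLike 𝕜] {u v : 𝕜} (hu : ‖u‖ < 1) (hv : ‖v‖ < 2) :
    HasSum (fun q : ℕ × List ℕ =>
        (multT (admissibleIndex q) : 𝕜) * u ^ (q.1 + q.2.sum) * v ^ q.2.length)
      (∑' N, genFunSlice u v N) := by
  have hterm := (summable_genFunTerm hu hv).hasSum
  rw [(hterm.prod_fiberwise (hasSum_genFunTerm_slice hu v)).tsum_eq]
  have hswap := (Equiv.prodComm (ℕ × List ℕ) ℕ).hasSum_iff.2 hterm
  refine hswap.prod_fiberwise fun q => ?_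
  have hq := (RCLike.hasSum_ofReal 𝕜).2 (hasSum_multT_admissibleIndex q)
  exact (hq.mul_right (u ^ (q.1 + q.2.sum))).mul_right (v ^ q.2.length)

theorem admissibleIndex_injective : Function.Injective admissibleIndex := by
  rintro ⟨k, K⟩ ⟨l, L⟩ h
  obtain ⟨hkl, hKL⟩ := List.cons.inj h
  exact Prod.ext (Nat.add_right_cancel hkl) (List.map_injective_iff.2 (add_left_injective 1) hKL)

theorem range_admissibleIndex : Set.range admissibleIndex = {K | Admissible K} := by
  refine Set.Subset.antisymm ?_ ?_
  · rintro _ ⟨q, rfl⟩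
    simp [Admissible, admissibleIndex]
  · rintro (_ | ⟨k, K⟩) ⟨hpos, hk⟩
    · exact absurd hk (by simp)
    · have hK : (K.map (· - 1)).map (· + 1) = K := by
        rw [List.map_map]
        exact (List.map_congr_left fun i hi =>
          Nat.sub_add_cancel (hpos i (List.mem_cons_of_mem k hi))).trans (List.map_id' K)
      exact ⟨(k - 2, K.map (· - 1)), congrArg₂ List.cons (Nat.sub_add_cancel hk) hK⟩

theorem sum_admissibleIndex (q : ℕ × List ℕ) :
    (admissibleIndex q).sum = q.1 + q.2.sum + q.2.length + 2 := by
  simp only [admissibleIndex, List.sum_cons, List.sum_map_add, List.map_id', List.map_const',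
    List.sum_replicate, smul_eq_mul, mul_one]
  ring

theorem length_admissibleIndex (q : ℕ × List ℕ) : (admissibleIndex q).length = q.2.length + 1 := by
  simp [admissibleIndex]

theorem G0d_eq_tsum_multT (m n : ℕ) :
    G0d (m + n + 2) (n + 1) =
      ∑' q : (fun q : ℕ × List ℕ => (q.1 + q.2.sum, q.2.length)) ⁻¹' {(m, n)},
        multT (admissibleIndex q) := by
  classical
  rw [tsum_subtype _ fun q => multT (admissibleIndex q), G0d, ← admissibleIndex_injective.tsum_eq]
  · refine tsum_congr fun q => if_congr ?_ rfl rfl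
    have hq : Admissible (admissibleIndex q) := range_admissibleIndex.subset ⟨q, rfl⟩
    simp only [hq, sum_admissibleIndex, length_admissibleIndex, Set.mem_preimage,
      Set.mem_singleton_iff, Prod.mk.injEq, true_and]
    omega
  · rw [range_admissibleIndex]
    exact fun K hK => (of_not_not fun h => hK (if_neg fun h' => h h'.1) : Admissible K)

theorem hasSum_G0d_genFun {𝕜 : Type*} [RCLike 𝕜] {u v : 𝕜} (hu : ‖u‖ < 1) (hv : ‖v‖ < 2) :
    HasSum (fun p : ℕ × ℕ => (G0d (p.1 + p.2 + 2) (p.2 + 1) : 𝕜) * u ^ p.1 * v ^ p.2)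
      (∑' N, genFunSlice u v N) := by
  refine ((hasSum_multT_genFun hu hv).tsum_fiberwise
    fun q => (q.1 + q.2.sum, q.2.length)).congr_fun fun p => ?_
  rw [G0d_eq_tsum_multT, RCLike.ofReal_tsum, mul_assoc, ← tsum_mul_right]
  refine tsum_congr ?_
  rintro ⟨q, hq : (_, _) = p⟩
  subst hq
  rw [mul_assoc]

theorem poch_one (n : ℕ) : poch 1 n = n.factorial := by
  rw [← Finset.prod_range_add_one_eq_factorial, poch, Nat.cast_prod]
  exact Finset.prod_congr rfl fun i _ => by push_cast; ring

theorem poch_ne_zero {a : ℂ} (ha : ∀ j : ℕ, a + j ≠ 0) (n : ℕ) : poch a n ≠ 0 :=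
  Finset.prod_ne_zero_iff.2 fun j _ => ha j

theorem mul_poch_add_one (a : ℂ) (n : ℕ) : a * poch (a + 1) n = poch a n * (a + n) := by
  have hshift : poch a (n + 1) = poch (a + 1) n * a := by
    simp only [poch, Finset.prod_range_succ', Nat.cast_succ, Nat.cast_zero, add_zero, add_assoc,
      add_comm (1 : ℂ)]
  rw [mul_comm, ← hshift, poch, Finset.prod_range_succ, poch]

theorem poch_div_poch_add_one {a : ℂ} (ha : ∀ j : ℕ, a + j ≠ 0) (n : ℕ) :
    poch a n / poch (a + 1) n = a / (a + n) := by
  have ha' (j : ℕ) : a + 1 + j ≠ 0 := by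
    simpa only [Nat.cast_succ, add_assoc, add_comm (1 : ℂ)] using ha (j + 1)
  rw [div_eq_div_iff (poch_ne_zero ha' n) (ha n), mul_poch_add_one]

theorem poch_add_eq_poch_mul_prod {a : ℂ} (ha : ∀ j : ℕ, a + j ≠ 0) (b : ℂ) (n : ℕ) :
    poch (a + b) n = poch a n * ∏ j ∈ Finset.range n, (1 + b / (a + j)) := by
  rw [poch, poch, ← Finset.prod_mul_distrib]
  refine Finset.prod_congr rfl fun j _ => ?_
  rw [mul_one_add, mul_div_cancel₀ b (ha j)]
  ring

theorem hyp3F2_add_one_add_one {a c : ℂ} (ha : ∀ j : ℕ, a + j ≠ 0) (hc : ∀ j : ℕ, c + j ≠ 0)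
    (b : ℂ) :
    hyp3F2 (a + b) c 1 (a + 1) (c + 1) 1 =
      ∑' n : ℕ, a / (a + n) * (c / (c + n)) * ∏ j ∈ Finset.range n, (1 + b / (a + j)) := by
  refine tsum_congr fun n => ?_
  have hn : (n.factorial : ℂ) ≠ 0 := Nat.cast_ne_zero.2 n.factorial_ne_zero
  rw [poch_add_eq_poch_mul_prod ha, poch_one, ← poch_div_poch_add_one ha,
    ← poch_div_poch_add_one hc, one_pow, mul_one, mul_assoc (n.factorial : ℂ),
    mul_comm (n.factorial : ℂ), mul_div_mul_right _ _ hn]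
  ring

theorem tsum_genFunSlice {u : ℂ} (hu : ‖u‖ < 1) (v : ℂ) :
    ∑' N, genFunSlice u v N =
      (1 - u)⁻¹ * hyp3F2 ((1 - u + v) / 2) (1 / 2) 1 ((3 - u) / 2) (3 / 2) 1 := by
  have ha (j : ℕ) : (1 - u) / 2 + j = (2 * j + 1 - u) / 2 := by ring
  have hc (j : ℕ) : (1 / 2 : ℂ) + j = (2 * j + 1) / 2 := by ring
  have ha₀ (j : ℕ) : (1 - u) / 2 + j ≠ 0 := by
    rw [ha]
    exact div_ne_zero (two_mul_add_one_sub_ne_zero hu j) two_ne_zero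
  have hc₀ (j : ℕ) : (1 / 2 : ℂ) + j ≠ 0 := by
    rw [hc]
    exact div_ne_zero (by exact_mod_cast (2 * j).succ_ne_zero) two_ne_zero
  have h1u : 1 - u ≠ 0 := by simpa using two_mul_add_one_sub_ne_zero hu 0
  rw [show (1 - u + v) / 2 = (1 - u) / 2 + v / 2 by ring,
    show (3 - u) / 2 = (1 - u) / 2 + 1 by ring, show (3 / 2 : ℂ) = 1 / 2 + 1 by norm_num,
    hyp3F2_add_one_add_one ha₀ hc₀, ← tsum_mul_left]
  refine tsum_congr fun N => ?_
  simp only [genFunSlice, truncProd, ha, hc, div_div_div_cancel_right₀ (two_ne_zero' ℂ)]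
  field_simp

theorem weight_depth_generating_function_multiple_t_general {u v : ℂ} (hu : ‖u‖ < 1)
    (hv : ‖v‖ < 2) :
    HasSum (fun p : ℕ × ℕ => (G0d (p.1 + p.2 + 2) (p.2 + 1) : ℂ) * u ^ p.1 * v ^ p.2)
      ((1 - u)⁻¹ * hyp3F2 ((1 - u + v) / 2) (1 / 2) 1 ((3 - u) / 2) (3 / 2) 1) :=
  tsum_genFunSlice hu v ▸ hasSum_G0d_genFun hu hv

/-- Generating function of the sums `G₀(k,n)` of multiple `t`-values of fixed weight and
depth: `∑_{k>n≥1} G₀(k,n) u^{k-n-1} v^{n-1} = (1/(1-u)) ⬝ ₃F₂((1-u+v)/2, 1/2, 1; (3-u)/2, 3/2; 1)`. -/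
theorem weight_depth_generating_function_multiple_t :
    ∃ δ > (0 : ℝ), ∀ u v : ℝ, |u| < δ → |v| < δ →
      Summable (fun p : ℕ × ℕ =>
        G0d (p.1 + p.2 + 2) (p.2 + 1) * u ^ p.1 * v ^ p.2) ∧
      ((∑' p : ℕ × ℕ, G0d (p.1 + p.2 + 2) (p.2 + 1) * u ^ p.1 * v ^ p.2 : ℝ) : ℂ)
        = (1 - (u : ℂ))⁻¹ *
            hyp3F2 ((1 - (u : ℂ) + (v : ℂ)) / 2) (1 / 2) 1
              ((3 - (u : ℂ)) / 2) (3 / 2) 1 := by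
  refine ⟨1, one_pos, fun u v hu hv => ?_⟩
  have h := weight_depth_generating_function_multiple_t_general (u := u) (v := v)
    (by rwa [Complex.norm_real]) (by rw [Complex.norm_real]; exact hv.trans one_lt_two)
  simp only [← Complex.ofReal_pow, ← Complex.ofReal_mul] at h
  exact ⟨Complex.summable_ofReal.1 h.summable, by rw [Complex.ofReal_tsum, h.tsum_eq]⟩
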